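/- Let B₁, B₂, …, B_n be events in a probability space. Suppose that each event B_i is mutually independent of all but at most d of the other events, and that Pr(B_i) ≤ p for all 1 ≤ i ≤ n. If e·p·(d+1) ≤ 1, then Pr(⋂_{i=1}^n B_i^c) > 0. -/

import Mathlib

open MeasureTheory
open scoped Classical

/-- The event `A` is mutually independent of the family of events `B`: for every two
disjoint finite subsets `S, T` of the index set,
`Pr(A ∩ ⋂_{j ∈ S} B j ∩ ⋂_{j ∈ T} (B j)ᶜ) = Pr(A) · Pr(⋂_{j ∈ S} B j ∩ ⋂_{j ∈ T} (B j)ᶜ)`. -/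
def MutuallyIndepOf {Ω : Type} [MeasurableSpace Ω] (μ : Measure Ω) (A : Set Ω)
    {ι : Type} (B : ι → Set Ω) : Prop :=
  ∀ S T : Finset ι, Disjoint S T →
    μ (A ∩ ((⋂ j ∈ S, B j) ∩ ⋂ j ∈ T, (B j)ᶜ)) =
      μ A * μ ((⋂ j ∈ S, B j) ∩ ⋂ j ∈ T, (B j)ᶜ)

theorem lll_num (d : ℕ) (p : ℝ) (h : Real.exp 1 * p * (d + 1) ≤ 1) :
    ∃ x : ℝ, 0 ≤ x ∧ x < 1 ∧ p ≤ x * (1 - x) ^ d := by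
  have he : 0 < Real.exp 1 := Real.exp_pos 1
  rcases Nat.eq_zero_or_pos d with rfl | hd
  · refine ⟨(Real.exp 1)⁻¹, by positivity, ?_, ?_⟩
    · apply inv_lt_one_of_one_lt₀
      simp
    · have h2 : p * Real.exp 1 ≤ 1 := by
        norm_num at h
        linarith
      rw [pow_zero, mul_one, ← one_div, le_div_iff₀ he]
      exact h2
  · have hd' : (0 : ℝ) < d := by exact_mod_cast hd
    refine ⟨1 / ((d : ℝ) + 1), by positivity, ?_, ?_⟩
    · rw [div_lt_one (by positivity)]
      linarith
    · have h1 : (1 + 1 / (d : ℝ)) ^ d ≤ Real.exp 1 := by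
        calc (1 + 1 / (d : ℝ)) ^ d ≤ (Real.exp (1 / (d : ℝ))) ^ d := by
              gcongr
              have := Real.add_one_le_exp (1 / (d : ℝ))
              linarith
          _ = Real.exp 1 := by
              rw [← Real.exp_nat_mul]
              congr 1
              field_simp
      have h2 : (1 - 1 / ((d : ℝ) + 1)) = (1 + 1 / (d : ℝ))⁻¹ := by
        field_simp
        ring
      have h3 : (Real.exp 1)⁻¹ ≤ (1 - 1 / ((d : ℝ) + 1)) ^ d := by
        rw [h2, inv_pow]
        exact inv_anti₀ (by positivity) h1
      calc p ≤ 1 / ((d : ℝ) + 1) * (Real.exp 1)⁻¹ := by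
            rw [← one_div, div_mul_div_comm, le_div_iff₀ (by positivity)]
            linarith
        _ ≤ _ := by gcongr

theorem lll_insert {Ω : Type} [MeasurableSpace Ω] (μ : Measure Ω) [IsProbabilityMeasure μ]
    {ι : Type} (B : ι → Set Ω) (hB : ∀ i, MeasurableSet (B i)) (S : Finset ι) (i : ι) :
    μ.real (⋂ j ∈ insert i S, (B j)ᶜ) =
      μ.real (⋂ j ∈ S, (B j)ᶜ) - μ.real (B i ∩ ⋂ j ∈ S, (B j)ᶜ) := by
  have h1 := measureReal_inter_add_sdiff (μ := μ) (s := ⋂ j ∈ S, (B j)ᶜ) (hB i)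
  have h2 : (⋂ j ∈ insert i S, (B j)ᶜ) = (⋂ j ∈ S, (B j)ᶜ) \ B i := by
    rw [Finset.set_biInter_insert, Set.inter_comm]
    rfl
  rw [h2, Set.inter_comm]
  linarith

theorem lll_chain {Ω : Type} [MeasurableSpace Ω] (μ : Measure Ω) [IsProbabilityMeasure μ]
    {ι : Type} (B : ι → Set Ω) (hB : ∀ i, MeasurableSet (B i)) (x : ℝ) (hx1 : x < 1)
    (S : Finset ι) (T : Finset ι) : Disjoint T S →
    (∀ U, U ⊂ S ∪ T → ∀ i, μ.real (B i ∩ ⋂ j ∈ U, (B j)ᶜ) ≤ x * μ.real (⋂ j ∈ U, (B j)ᶜ)) →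
    (1 - x) ^ T.card * μ.real (⋂ j ∈ S, (B j)ᶜ) ≤ μ.real (⋂ j ∈ S ∪ T, (B j)ᶜ) := by
  induction T using Finset.induction_on with
  | empty => simp
  | insert a T ha ih =>
    intro hd hU
    rw [Finset.disjoint_insert_left] at hd
    have hss : S ∪ T ⊂ S ∪ insert a T := by
      rw [Finset.union_insert]
      exact Finset.ssubset_insert (by simp [ha, hd.1])
    have h1 := ih hd.2 (fun U hUs => hU U (hUs.trans hss))
    have h2 := hU _ hss a
    rw [Finset.union_insert, lll_insert μ B hB, Finset.card_insert_of_notMem ha, pow_succ]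
    have h3 := mul_le_mul_of_nonneg_left h1 (by linarith : 0 ≤ 1 - x)
    linarith

theorem lll_main {Ω : Type} [MeasurableSpace Ω] (μ : Measure Ω) [IsProbabilityMeasure μ]
    {ι : Type} (B : ι → Set Ω) (hB : ∀ i, MeasurableSet (B i)) (d : ℕ) (p : ℝ)
    (hdep : ∀ i : ι, ∃ J : Finset ι, i ∉ J ∧ J.card ≤ d ∧
      MutuallyIndepOf μ (B i) (fun j : {j : ι // j ∉ J ∧ j ≠ i} => B j))
    (hp : ∀ i, μ.real (B i) ≤ p) (x : ℝ) (hx0 : 0 ≤ x) (hx1 : x < 1)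
    (hpx : p ≤ x * (1 - x) ^ d) (S : Finset ι) :
    ∀ i, μ.real (B i ∩ ⋂ j ∈ S, (B j)ᶜ) ≤ x * μ.real (⋂ j ∈ S, (B j)ᶜ) := by
  induction S using Finset.strongInduction with
  | H S ih =>
    intro i
    by_cases hi : i ∈ S
    · have : B i ∩ ⋂ j ∈ S, (B j)ᶜ = ∅ := by
        ext ω
        simp only [Set.mem_inter_iff, Set.mem_iInter, Set.mem_compl_iff, Set.mem_empty_iff_false,
          iff_false, not_and]
        exact fun h1 h2 => h2 i hi h1
      rw [this, measureReal_empty]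
      positivity
    obtain ⟨J, hiJ, hJd, hJ⟩ := hdep i
    have hSU : S \ J ∪ S ∩ J = S := Finset.sdiff_union_inter S J
    have hc := lll_chain μ B hB x hx1 (S \ J) (S ∩ J)
      (Finset.disjoint_sdiff_inter S J).symm (by rw [hSU]; exact ih)
    rw [hSU] at hc
    have hind : μ.real (B i ∩ ⋂ j ∈ S \ J, (B j)ᶜ) =
        μ.real (B i) * μ.real (⋂ j ∈ S \ J, (B j)ᶜ) := by
      have h1 := hJ ∅ ((S \ J).subtype _) (Finset.disjoint_empty_left _)
      have h2 : (⋂ j ∈ (S \ J).subtype (fun j => j ∉ J ∧ j ≠ i), (B j)ᶜ) =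
          ⋂ j ∈ S \ J, (B j)ᶜ := by
        ext ω
        simp only [Set.mem_iInter, Finset.mem_subtype, Finset.mem_sdiff, Subtype.forall]
        constructor
        · intro h j hj
          exact h j ⟨hj.2, fun e => hi (e ▸ hj.1)⟩ hj
        · intro h j _ hj
          exact h j hj
      rw [h2] at h1
      simp only [Finset.notMem_empty, Set.iInter_of_empty, Set.iInter_univ, Set.univ_inter] at h1
      simp only [measureReal_def, h1, ENNReal.toReal_mul]
    have hcard : (S ∩ J).card ≤ d := (Finset.card_le_card Finset.inter_subset_right).trans hJd
    calc μ.real (B i ∩ ⋂ j ∈ S, (B j)ᶜ) ≤ μ.real (B i ∩ ⋂ j ∈ S \ J, (B j)ᶜ) := by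
          refine measureReal_mono ?_ (measure_ne_top _ _)
          apply Set.inter_subset_inter_right
          exact Set.biInter_subset_biInter_left (fun j hj => (Finset.mem_sdiff.1 hj).1)
      _ = μ.real (B i) * μ.real (⋂ j ∈ S \ J, (B j)ᶜ) := hind
      _ ≤ (x * (1 - x) ^ (S ∩ J).card) * μ.real (⋂ j ∈ S \ J, (B j)ᶜ) := by
          apply mul_le_mul_of_nonneg_right _ measureReal_nonneg
          refine ((hp i).trans hpx).trans (mul_le_mul_of_nonneg_left ?_ hx0)
          exact pow_le_pow_of_le_one (by linarith) (by linarith) hcard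
      _ ≤ x * μ.real (⋂ j ∈ S, (B j)ᶜ) := by
          rw [mul_assoc]
          exact mul_le_mul_of_nonneg_left hc hx0

theorem stmt_12 {Ω : Type} [MeasureSpace Ω]
    [IsProbabilityMeasure (volume : Measure Ω)]
    (n : ℕ) (B : Fin n → Set Ω) (hB : ∀ i, MeasurableSet (B i))
    (d : ℕ) (p : ℝ)
    -- each `B i` is mutually independent of all but at most `d` of the other events
    (hdep : ∀ i : Fin n, ∃ J : Finset (Fin n), i ∉ J ∧ J.card ≤ d ∧
      MutuallyIndepOf volume (B i) (fun j : {j : Fin n // j ∉ J ∧ j ≠ i} => B j))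
    (hp : ∀ i, (volume (B i)).toReal ≤ p)
    (h : Real.exp 1 * p * (d + 1) ≤ 1) :
    0 < (volume (⋂ i, (B i)ᶜ)).toReal := by
  obtain ⟨x, hx0, hx1, hpx⟩ := lll_num d p h
  have hm := lll_main volume B hB d p hdep hp x hx0 hx1 hpx
  have hc := lll_chain volume B hB x hx1 ∅ Finset.univ (Finset.disjoint_empty_right _)
    (fun U _ => hm U)
  simp only [Finset.empty_union, Finset.notMem_empty, Set.iInter_of_empty, Set.iInter_univ,
    Finset.mem_univ, Set.iInter_true, probReal_univ, mul_one] at hc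
  have hpos : 0 < 1 - x := by linarith
  exact lt_of_lt_of_le (pow_pos hpos _) hc
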